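/- For every integer k ≥ 0, the space of divergence-free n-tuples of degree-k harmonic polynomials decomposes as a direct sum: {(f₁,…,fₙ) : each fᵣ ∈ Hₖ and ∑ᵣ ∂_{xᵣ}(fᵣ) = 0} = ψ(H_{k+1}) ⊕ Ĥ_{k,2}. -/

import Mathlib

open MvPolynomial

/-- The Laplacian `Δ = ∑ᵣ ∂²_{xᵣ}` on `ℝ[x₁,…,xₙ]`. -/
noncomputable def lap {n : ℕ} (p : MvPolynomial (Fin n) ℝ) : MvPolynomial (Fin n) ℝ :=
  ∑ r : Fin n, pderiv r (pderiv r p)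

/-- The gradient map `ψ(f) = (∂_{x₁}f,…,∂_{xₙ}f)`. -/
noncomputable def gradPsi {n : ℕ} (f : MvPolynomial (Fin n) ℝ) :
    Fin n → MvPolynomial (Fin n) ℝ :=
  fun j => pderiv j f

/-- Membership in `ψ(H_{k+1})`. -/
def memPsiH {n : ℕ} (k : ℕ) (v : Fin n → MvPolynomial (Fin n) ℝ) : Prop :=
  ∃ f : MvPolynomial (Fin n) ℝ, f.IsHomogeneous (k + 1) ∧ lap f = 0 ∧ v = gradPsi f

/-- `Ĥ_{k,2}` : tuples of degree-`k` harmonics `(f₁,…,fₙ)` with `∑ᵣ xᵣ fᵣ = 0`. -/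
def memHk2 {n : ℕ} (k : ℕ) (w : Fin n → MvPolynomial (Fin n) ℝ) : Prop :=
  (∀ r, (w r).IsHomogeneous k ∧ lap (w r) = 0) ∧ (∑ r : Fin n, X r * w r) = 0

/-- The space of divergence-free tuples of degree-`k` harmonic polynomials. -/
def memDivFree {n : ℕ} (k : ℕ) (u : Fin n → MvPolynomial (Fin n) ℝ) : Prop :=
  (∀ r, (u r).IsHomogeneous k ∧ lap (u r) = 0) ∧ (∑ r : Fin n, pderiv r (u r)) = 0

/-!
Write `ρ u = ∑ᵣ xᵣ uᵣ`. For a tuple of harmonic polynomials, `Δ (ρ u) = 2 div u`, so `ρ` sends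
divergence-free harmonic tuples of degree `k` to harmonic polynomials of degree `k + 1`, and its
kernel on harmonic tuples consists of divergence-free ones. Euler's identity `ρ (∇ f) = (k + 1) f`,
for `f` of degree `k + 1`, says that `∇ / (k + 1)` is a section of `ρ`; the decomposition is the
resulting splitting of `ρ`.
-/

theorem existsUnique_add_of_disjoint {R M : Type*} [Ring R] [AddCommGroup M] [Module R M]
    {p q : Submodule R M} (hpq : Disjoint p q) {x : M} (hx : x ∈ p ⊔ q) :
    ∃! yz : M × M, yz.1 ∈ p ∧ yz.2 ∈ q ∧ x = yz.1 + yz.2 := by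
  obtain ⟨y, hy, z, hz, rfl⟩ := Submodule.mem_sup.mp hx
  refine ⟨(y, z), ⟨hy, hz, rfl⟩, fun ⟨y', z'⟩ ⟨hy', hz', h⟩ => ?_⟩
  have hdiff : (y' - y) + (z' - z) = 0 := by rw [sub_add_sub_comm, ← h, sub_self]
  obtain ⟨hy₀, hz₀⟩ :=
    Submodule.disjoint_iff_add_eq_zero.mp hpq (sub_mem hy' hy) (sub_mem hz' hz) hdiff
  exact Prod.ext (sub_eq_zero.mp hy₀) (sub_eq_zero.mp hz₀)

section VectorCalculus

variable {σ R : Type*} [CommSemiring R]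

theorem pderiv_pderiv_comm (i j : σ) (p : MvPolynomial σ R) :
    pderiv i (pderiv j p) = pderiv j (pderiv i p) := by
  classical
  obtain rfl | hij := eq_or_ne i j
  · rfl
  · ext m
    simp only [coeff_pderiv, Finsupp.add_apply, Finsupp.single_eq_of_ne hij,
      Finsupp.single_eq_of_ne hij.symm, add_zero, add_right_comm m]
    ring

/-- The gradient `∇ p = (∂_{xᵣ} p)ᵣ` of a polynomial. -/
noncomputable def polyGradient : MvPolynomial σ R →ₗ[R] σ → MvPolynomial σ R :=
  LinearMap.pi fun r => (pderiv r).toLinearMap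

@[simp]
theorem polyGradient_apply (p : MvPolynomial σ R) (r : σ) : polyGradient p r = pderiv r p :=
  rfl

variable [Fintype σ]

/-- The divergence `∑ᵣ ∂_{xᵣ} uᵣ` of a tuple of polynomials. -/
noncomputable def polyDivergence : (σ → MvPolynomial σ R) →ₗ[R] MvPolynomial σ R :=
  ∑ r, (pderiv r).toLinearMap ∘ₗ LinearMap.proj r

theorem polyDivergence_apply (u : σ → MvPolynomial σ R) :
    polyDivergence u = ∑ r, pderiv r (u r) := by
  simp [polyDivergence]

/-- The Laplacian `Δ = div ∘ ∇` on polynomials. -/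
noncomputable def polyLaplacian : MvPolynomial σ R →ₗ[R] MvPolynomial σ R :=
  polyDivergence ∘ₗ polyGradient

theorem polyLaplacian_apply (p : MvPolynomial σ R) :
    polyLaplacian p = ∑ r, pderiv r (pderiv r p) :=
  polyDivergence_apply _

/-- The radial component `ρ u = ∑ᵣ xᵣ uᵣ` of a tuple of polynomials. -/
noncomputable def radialComponent : (σ → MvPolynomial σ R) →ₗ[R] MvPolynomial σ R :=
  ∑ r, LinearMap.mulLeft R (X r) ∘ₗ LinearMap.proj r

theorem radialComponent_apply (u : σ → MvPolynomial σ R) :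
    radialComponent u = ∑ r, X r * u r := by
  simp [radialComponent]

theorem polyLaplacian_pderiv (i : σ) (p : MvPolynomial σ R) :
    polyLaplacian (pderiv i p) = pderiv i (polyLaplacian p) := by
  simp only [polyLaplacian_apply, map_sum, pderiv_pderiv_comm _ i]

theorem polyLaplacian_X_mul (i : σ) (p : MvPolynomial σ R) :
    polyLaplacian (X i * p) = 2 * pderiv i p + X i * polyLaplacian p := by
  classical
  have pderiv_X_mul (r : σ) (q : MvPolynomial σ R) :
      pderiv r (X i * q) = (if r = i then q else 0) + X i * pderiv r q := by
    obtain rfl | hr := eq_or_ne r i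
    · simp [add_comm]
    · simp [pderiv_X_of_ne hr.symm, hr]
  simp only [polyLaplacian_apply, pderiv_X_mul, map_add, apply_ite (pderiv _), map_zero,
    Finset.sum_add_distrib, Finset.sum_ite_eq', Finset.mem_univ, if_true, Finset.mul_sum]
  ring

theorem polyLaplacian_radialComponent (u : σ → MvPolynomial σ R) :
    polyLaplacian (radialComponent u) =
      2 * polyDivergence u + radialComponent fun r => polyLaplacian (u r) := by
  simp only [radialComponent_apply, polyDivergence_apply, map_sum, polyLaplacian_X_mul,
    Finset.sum_add_distrib, Finset.mul_sum]

theorem radialComponent_polyGradient {k : ℕ} {f : MvPolynomial σ R} (hf : f.IsHomogeneous k) :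
    radialComponent (polyGradient f) = k • f := by
  simpa only [radialComponent_apply, polyGradient_apply] using hf.sum_X_mul_pderiv

theorem isHomogeneous_radialComponent {k : ℕ} {u : σ → MvPolynomial σ R}
    (hu : ∀ r, (u r).IsHomogeneous k) : (radialComponent u).IsHomogeneous (k + 1) := by
  rw [radialComponent_apply, add_comm]
  exact IsHomogeneous.sum _ _ _ fun r _ => (isHomogeneous_X R r).mul (hu r)

end VectorCalculus

section HarmonicTuples

variable (σ R : Type*) [Fintype σ] [CommSemiring R]

/-- The space `Hₖ` of harmonic homogeneous polynomials of degree `k`. -/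
noncomputable def harmonicPolys (k : ℕ) : Submodule R (MvPolynomial σ R) :=
  homogeneousSubmodule σ R k ⊓ LinearMap.ker polyLaplacian

/-- The space of tuples of polynomials in `Hₖ`. -/
noncomputable def harmonicTuples (k : ℕ) : Submodule R (σ → MvPolynomial σ R) :=
  Submodule.pi Set.univ fun _ => harmonicPolys σ R k

/-- The space of divergence-free tuples of polynomials in `Hₖ`. -/
noncomputable def divFreeTuples (k : ℕ) : Submodule R (σ → MvPolynomial σ R) :=
  harmonicTuples σ R k ⊓ LinearMap.ker polyDivergence

/-- The space `Ĥ_{k,2}` of tuples of polynomials in `Hₖ` whose radial component vanishes. -/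
noncomputable def tangentialTuples (k : ℕ) : Submodule R (σ → MvPolynomial σ R) :=
  harmonicTuples σ R k ⊓ LinearMap.ker radialComponent

/-- The space `ψ(H_{k+1})` of gradients of harmonic polynomials. The index `k` is the degree of
the entries of the gradient, not that of the potential. -/
noncomputable def gradientTuples (k : ℕ) : Submodule R (σ → MvPolynomial σ R) :=
  (harmonicPolys σ R (k + 1)).map polyGradient

variable {σ R} {k : ℕ}

theorem mem_harmonicPolys {p : MvPolynomial σ R} :
    p ∈ harmonicPolys σ R k ↔ p.IsHomogeneous k ∧ polyLaplacian p = 0 :=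
  Iff.rfl

theorem mem_harmonicTuples {u : σ → MvPolynomial σ R} :
    u ∈ harmonicTuples σ R k ↔ ∀ r, u r ∈ harmonicPolys σ R k := by
  simp [harmonicTuples]

theorem polyLaplacian_radialComponent_of_mem_harmonicTuples {u : σ → MvPolynomial σ R}
    (hu : u ∈ harmonicTuples σ R k) :
    polyLaplacian (radialComponent u) = 2 * polyDivergence u := by
  have hlap : (fun r => polyLaplacian (u r)) = 0 :=
    funext fun r => (mem_harmonicTuples.mp hu r).2
  rw [polyLaplacian_radialComponent, hlap, map_zero, add_zero]

theorem radialComponent_mem_harmonicPolys {u : σ → MvPolynomial σ R}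
    (hu : u ∈ divFreeTuples σ R k) : radialComponent u ∈ harmonicPolys σ R (k + 1) := by
  obtain ⟨hharm, hdiv : polyDivergence u = 0⟩ := hu
  refine ⟨isHomogeneous_radialComponent fun r => (mem_harmonicTuples.mp hharm r).1, ?_⟩
  rw [SetLike.mem_coe, LinearMap.mem_ker,
    polyLaplacian_radialComponent_of_mem_harmonicTuples hharm, hdiv, mul_zero]

theorem gradientTuples_le_divFreeTuples : gradientTuples σ R k ≤ divFreeTuples σ R k := by
  rintro _ ⟨f, ⟨hf, hlap : polyLaplacian f = 0⟩, rfl⟩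
  refine ⟨mem_harmonicTuples.mpr fun r => ⟨IsHomogeneous.pderiv hf, ?_⟩, hlap⟩
  rw [SetLike.mem_coe, LinearMap.mem_ker, polyGradient_apply, polyLaplacian_pderiv, hlap, map_zero]

theorem tangentialTuples_le_divFreeTuples [IsAddTorsionFree R] :
    tangentialTuples σ R k ≤ divFreeTuples σ R k := by
  rintro w ⟨hharm, hrad : radialComponent w = 0⟩
  have htwo : 2 • polyDivergence w = 0 := by
    rw [nsmul_eq_mul, Nat.cast_ofNat, ← polyLaplacian_radialComponent_of_mem_harmonicTuples hharm,
      hrad, map_zero]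
  exact ⟨hharm, (smul_eq_zero_iff_right two_ne_zero).mp htwo⟩

theorem disjoint_gradientTuples_tangentialTuples [IsAddTorsionFree R] :
    Disjoint (gradientTuples σ R k) (tangentialTuples σ R k) := by
  rw [Submodule.disjoint_def]
  rintro _ ⟨f, hf, rfl⟩ ⟨-, hrad : radialComponent (polyGradient f) = 0⟩
  rw [radialComponent_polyGradient hf.1] at hrad
  rw [(smul_eq_zero_iff_right k.succ_ne_zero).mp hrad, map_zero]

end HarmonicTuples

section Decomposition

variable {σ R : Type*} [Fintype σ] [CommRing R] [Algebra ℚ R] {k : ℕ}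

theorem divFreeTuples_le_sup :
    divFreeTuples σ R k ≤ gradientTuples σ R k ⊔ tangentialTuples σ R k := by
  intro u hu
  set c : R := algebraMap ℚ R (k + 1)⁻¹
  have hc : c * (k + 1 : ℕ) = 1 := by
    rw [← map_natCast (algebraMap ℚ R), ← map_mul, Nat.cast_succ,
      inv_mul_cancel₀ k.cast_add_one_ne_zero, map_one]
  have hf : c • radialComponent u ∈ harmonicPolys σ R (k + 1) :=
    Submodule.smul_mem _ _ (radialComponent_mem_harmonicPolys hu)
  set v := polyGradient (c • radialComponent u)
  have hv : v ∈ gradientTuples σ R k := Submodule.mem_map_of_mem hf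
  have hrad : radialComponent v = radialComponent u := by
    rw [radialComponent_polyGradient hf.1, ← Nat.cast_smul_eq_nsmul R, smul_smul, mul_comm, hc,
      one_smul]
  refine Submodule.mem_sup.mpr ⟨v, hv, u - v, ⟨?_, ?_⟩, add_sub_cancel v u⟩
  · exact sub_mem hu.1 (gradientTuples_le_divFreeTuples hv).1
  · rw [SetLike.mem_coe, LinearMap.mem_ker, map_sub, hrad, sub_self]

theorem divFree_decomposition_general (σ R : Type*) [Fintype σ] [CommRing R] [Algebra ℚ R]
    (k : ℕ) :
    Disjoint (gradientTuples σ R k) (tangentialTuples σ R k) ∧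
      gradientTuples σ R k ⊔ tangentialTuples σ R k = divFreeTuples σ R k := by
  have : IsAddTorsionFree R := .of_module_rat R
  refine ⟨disjoint_gradientTuples_tangentialTuples, le_antisymm ?_ divFreeTuples_le_sup⟩
  exact sup_le gradientTuples_le_divFreeTuples tangentialTuples_le_divFreeTuples

end Decomposition

section RealPolynomials

variable {n k : ℕ}

theorem lap_eq_polyLaplacian (p : MvPolynomial (Fin n) ℝ) : lap p = polyLaplacian p :=
  (polyLaplacian_apply p).symm

theorem memPsiH_iff_mem_gradientTuples {v : Fin n → MvPolynomial (Fin n) ℝ} :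
    memPsiH k v ↔ v ∈ gradientTuples (Fin n) ℝ k := by
  simp only [memPsiH, lap_eq_polyLaplacian, gradientTuples, Submodule.mem_map, mem_harmonicPolys,
    and_assoc, eq_comm (a := v)]
  rfl

theorem memHk2_iff_mem_tangentialTuples {w : Fin n → MvPolynomial (Fin n) ℝ} :
    memHk2 k w ↔ w ∈ tangentialTuples (Fin n) ℝ k := by
  simp only [memHk2, lap_eq_polyLaplacian, tangentialTuples, Submodule.mem_inf, mem_harmonicTuples,
    mem_harmonicPolys, LinearMap.mem_ker, radialComponent_apply]

theorem memDivFree_iff_mem_divFreeTuples {u : Fin n → MvPolynomial (Fin n) ℝ} :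
    memDivFree k u ↔ u ∈ divFreeTuples (Fin n) ℝ k := by
  simp only [memDivFree, lap_eq_polyLaplacian, divFreeTuples, Submodule.mem_inf,
    mem_harmonicTuples, mem_harmonicPolys, LinearMap.mem_ker, polyDivergence_apply]

end RealPolynomials

/-- `{(f₁,…,fₙ) : fᵣ ∈ Hₖ, ∑ᵣ ∂_{xᵣ}(fᵣ) = 0} = ψ(H_{k+1}) ⊕ Ĥ_{k,2}`:
both summands lie in the divergence-free space and each of its elements decomposes
uniquely as a sum of elements of the two summands. -/
theorem divFree_decomposition (n : ℕ) (hn : 3 ≤ n) (k : ℕ) :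
    (∀ v : Fin n → MvPolynomial (Fin n) ℝ, memPsiH k v → memDivFree k v) ∧
    (∀ w : Fin n → MvPolynomial (Fin n) ℝ, memHk2 k w → memDivFree k w) ∧
    (∀ u : Fin n → MvPolynomial (Fin n) ℝ, memDivFree k u →
      ∃! p : (Fin n → MvPolynomial (Fin n) ℝ) × (Fin n → MvPolynomial (Fin n) ℝ),
        memPsiH k p.1 ∧ memHk2 k p.2 ∧ u = p.1 + p.2) := by
  obtain ⟨hdisj, hsup⟩ := divFree_decomposition_general (Fin n) ℝ k
  simp only [memPsiH_iff_mem_gradientTuples, memHk2_iff_mem_tangentialTuples,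
    memDivFree_iff_mem_divFreeTuples, ← hsup]
  exact ⟨fun _ => Submodule.mem_sup_left, fun _ => Submodule.mem_sup_right,
    fun _ => existsUnique_add_of_disjoint hdisj⟩
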